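/- Assume the growth conditions (GC) and the compactness-continuity conditions (CC). Let f₀ be a measurable selector and define the policy iteration sequences by v_n := V_{f_n} and f_{n+1} a measurable selector with T(v_n^e) = T_{f_{n+1}}(v_n^e), where v_n^e is the lower semicontinuous envelope of v_n. Then for every n ≥ 0 the chain of pointwise inequalities v_n ≥ v_n^e ≥ T(v_n^e) ≥ v_{n+1} ≥ v_{n+1}^e holds on X. -/

import Mathlib

open MeasureTheory ProbabilityTheory Filter Topology
open scoped ENNReal

/-- The weighted norm `‖u‖_W = sup_x |u x| / W x`, valued in `ℝ≥0∞`. -/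
noncomputable def WNorm {X : Type*} (W u : X → ℝ) : ℝ≥0∞ :=
  ⨆ x, ENNReal.ofReal (|u x| / W x)

/-- The dynamic programming (Bellman) operator
`Tu(x) = inf_{a ∈ A(x)} [C(x,a) + α ∫ u dQ(·|x,a)]`. -/
noncomputable def Tbell {X A : Type*} [MeasurableSpace X] [MeasurableSpace A]
    (Adm : X → Set A) (Q : Kernel (X × A) X) (C : X × A → ℝ) (α : ℝ)
    (u : X → ℝ) (x : X) : ℝ :=
  sInf ((fun a => C (x, a) + α * ∫ y, u y ∂(Q (x, a))) '' Adm x)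

/-- The lower semicontinuous envelope of `u : X → ℝ`, computed in the extended
reals: `uᵉ(x) = sup_{r>0} inf_{y ∈ B_r(x)} u(y)`. -/
noncomputable def lscEnvE {X : Type*} [MetricSpace X] (u : X → ℝ) (x : X) : EReal :=
  ⨆ r ∈ Set.Ioi (0 : ℝ), ⨅ y ∈ Metric.ball x r, (u y : EReal)

/-!
Both nontrivial inequalities are comparison arguments. Since `v_n` is a fixed point of `T_{f_n}` and
`v_nᵉ ≤ v_n`, monotonicity gives `T(v_nᵉ) ≤ v_n`. The function `T(v_nᵉ)` is lower semicontinuous, by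
Fatou's lemma for weakly convergent measures followed by Berge's minimum theorem; as `v_nᵉ` is the
largest lower semicontinuous minorant of `v_n`, it dominates `T(v_nᵉ)`. Consequently
`w := v_{n+1} - v_nᵉ` satisfies `w ≤ α ∫ w dQ(·|x, f_{n+1}(x))`. Iterating this from `w ≤ L W`
yields `w ≤ (αβ)^k L W` for all `k`, so `w ≤ 0`, and one more application of `T_{f_{n+1}}` gives
`v_{n+1} ≤ T(v_nᵉ)`.
-/

theorem abs_le_toReal_wNorm_mul {X : Type*} {W u : X → ℝ} (hu : WNorm W u < ⊤) {x : X}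
    (hx : 0 < W x) : |u x| ≤ (WNorm W u).toReal * W x := by
  rw [← div_le_iff₀ hx, ← ENNReal.ofReal_le_iff_le_toReal hu.ne]
  exact le_iSup (fun x => ENNReal.ofReal (|u x| / W x)) x

section LscEnvelope

variable {X : Type*} [MetricSpace X] {u e : X → ℝ}

theorem lscEnvE_eq_liminf (u : X → ℝ) (x : X) :
    lscEnvE u x = liminf (fun y => (u y : EReal)) (𝓝 x) :=
  Metric.nhds_basis_ball.liminf_eq_iSup_iInf.symm

theorem lowerSemicontinuous_lscEnvE (u : X → ℝ) : LowerSemicontinuous (lscEnvE u) := by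
  intro x c hc
  obtain ⟨d, hcd, hd⟩ := exists_between hc
  rw [lscEnvE_eq_liminf] at hd
  filter_upwards [(eventually_lt_of_lt_liminf hd).eventually_nhds] with y hy
  rw [lscEnvE_eq_liminf]
  exact hcd.trans_le (le_liminf_of_le (by isBoundedDefault) (hy.mono fun _ => le_of_lt))

/-- `e` is the lower semicontinuous envelope of `u`. Equating the real-valued `e` with the envelope
in `EReal` includes the requirement that the envelope be finite everywhere. -/
def IsLscEnvelope (u e : X → ℝ) : Prop :=
  ∀ x, (e x : EReal) = lscEnvE u x

namespace IsLscEnvelope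

theorem le (he : IsLscEnvelope u e) (x : X) : e x ≤ u x := by
  rw [← EReal.coe_le_coe_iff, he x]
  exact iSup₂_le fun r hr => iInf₂_le x (Metric.mem_ball_self hr)

theorem lowerSemicontinuous (he : IsLscEnvelope u e) : LowerSemicontinuous e := by
  intro x c hc
  have hc' : (c : EReal) < lscEnvE u x := by rwa [← he x, EReal.coe_lt_coe_iff]
  filter_upwards [lowerSemicontinuous_lscEnvE u x c hc'] with y hy
  rwa [← he y, gt_iff_lt, EReal.coe_lt_coe_iff] at hy

theorem ge_of_lowerSemicontinuous_of_le (he : IsLscEnvelope u e) {g : X → ℝ}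
    (hg : LowerSemicontinuous g) (hgu : ∀ x, g x ≤ u x) (x : X) : g x ≤ e x := by
  refine le_of_forall_lt fun c hc => EReal.coe_lt_coe_iff.1 ?_
  obtain ⟨d, hcd, hd⟩ := exists_between hc
  rw [he x, lscEnvE_eq_liminf]
  refine (EReal.coe_lt_coe_iff.2 hcd).trans_le (le_liminf_of_le (by isBoundedDefault) ?_)
  filter_upwards [hg x d hd] with y hy
  exact EReal.coe_le_coe_iff.2 (hy.le.trans (hgu y))

theorem abs_le_of_forall_abs_le (he : IsLscEnvelope u e) {b : X → ℝ} (hb : Continuous b)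
    (hub : ∀ x, |u x| ≤ b x) (x : X) : |e x| ≤ b x :=
  abs_le.2
    ⟨he.ge_of_lowerSemicontinuous_of_le hb.neg.lowerSemicontinuous
        (fun y => neg_le_of_abs_le (hub y)) x,
      (he.le x).trans (le_of_abs_le (hub x))⟩

end IsLscEnvelope

end LscEnvelope

section WeakConvergence

variable {X P : Type*} [TopologicalSpace X] [HasOuterApproxClosed X] [MeasurableSpace X]
  [OpensMeasurableSpace X]

theorem lintegral_ofReal_le_liminf_of_lowerSemicontinuous {L : Filter P} [L.IsCountablyGenerated]
    {μs : P → ProbabilityMeasure X} {μ : ProbabilityMeasure X} (hμ : Tendsto μs L (𝓝 μ))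
    {g : X → ℝ} (hg : LowerSemicontinuous g) (hg0 : ∀ x, 0 ≤ g x) :
    ∫⁻ x, ENNReal.ofReal (g x) ∂(μ : Measure X) ≤
      liminf (fun p => ∫⁻ x, ENNReal.ofReal (g x) ∂(μs p : Measure X)) L := by
  have layercake (ν : Measure X) :
      ∫⁻ x, ENNReal.ofReal (g x) ∂ν = ∫⁻ t in Set.Ioi (0 : ℝ), ν {x | t < g x} :=
    lintegral_eq_lintegral_meas_lt ν (.of_forall hg0) hg.measurable.aemeasurable
  have measurable_tail (p : P) : Measurable fun t : ℝ => (μs p : Measure X) {x | t < g x} :=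
    Antitone.measurable fun _ _ hst => measure_mono fun _ hx => hst.trans_lt hx
  simp only [layercake]
  calc ∫⁻ t in Set.Ioi (0 : ℝ), (μ : Measure X) {x | t < g x}
      ≤ ∫⁻ t in Set.Ioi (0 : ℝ), liminf (fun p => (μs p : Measure X) {x | t < g x}) L :=
        lintegral_mono fun t =>
          ProbabilityMeasure.le_liminf_measure_open_of_tendsto hμ (hg.isOpen_preimage t)
    _ ≤ liminf (fun p => ∫⁻ t in Set.Ioi (0 : ℝ), (μs p : Measure X) {x | t < g x}) L :=
        lintegral_liminf_le measurable_tail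

variable [TopologicalSpace P] [FirstCountableTopology P] {K : Set P} {μ : P → Measure X}
  [∀ p, IsProbabilityMeasure (μ p)] {g b : X → ℝ}

theorem lowerSemicontinuousOn_integral_of_nonneg
    (hμ : ∀ φ : X → ℝ, Continuous φ → (∃ c, ∀ x, |φ x| ≤ c) →
      ContinuousOn (fun p => ∫ x, φ x ∂(μ p)) K)
    (hg : LowerSemicontinuous g) (hg0 : ∀ x, 0 ≤ g x) (hgint : ∀ p ∈ K, Integrable g (μ p)) :
    LowerSemicontinuousOn (fun p => ∫ x, g x ∂(μ p)) K := by
  intro p hp c hc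
  rcases lt_or_ge c 0 with hc0 | hc0
  · exact .of_forall fun q => hc0.trans_le (integral_nonneg hg0)
  let μs (q : P) : ProbabilityMeasure X := ⟨μ q, inferInstance⟩
  have tendsto_μs : Tendsto μs (𝓝[K] p) (𝓝 (μs p)) :=
    ProbabilityMeasure.tendsto_iff_forall_integral_tendsto.2 fun φ =>
      hμ φ φ.continuous ⟨‖φ‖, φ.norm_coe_le_norm⟩ p hp
  have lt_lintegral_iff {q : P} (hq : q ∈ K) :
      ENNReal.ofReal c < ∫⁻ x, ENNReal.ofReal (g x) ∂(μ q) ↔ c < ∫ x, g x ∂(μ q) := by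
    rw [← ofReal_integral_eq_lintegral_ofReal (hgint q hq) (.of_forall hg0),
      ENNReal.ofReal_lt_ofReal_iff_of_nonneg hc0]
  have lt_liminf := ((lt_lintegral_iff hp).2 hc).trans_le
    (lintegral_ofReal_le_liminf_of_lowerSemicontinuous tendsto_μs hg hg0)
  filter_upwards [eventually_lt_of_lt_liminf lt_liminf, self_mem_nhdsWithin] with q hq hqK
  exact (lt_lintegral_iff hqK).1 hq

theorem lowerSemicontinuousOn_integral_of_neg_le
    (hμ : ∀ φ : X → ℝ, Continuous φ → (∃ c, ∀ x, |φ x| ≤ c) →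
      ContinuousOn (fun p => ∫ x, φ x ∂(μ p)) K)
    (hb : Continuous b) (hbint : ∀ p ∈ K, Integrable b (μ p))
    (hbK : ContinuousOn (fun p => ∫ x, b x ∂(μ p)) K)
    (hg : LowerSemicontinuous g) (hbg : ∀ x, -b x ≤ g x) (hgint : ∀ p ∈ K, Integrable g (μ p)) :
    LowerSemicontinuousOn (fun p => ∫ x, g x ∂(μ p)) K := by
  have lsc_shifted : LowerSemicontinuousOn (fun p => ∫ x, g x + b x ∂(μ p)) K :=
    lowerSemicontinuousOn_integral_of_nonneg hμ (hg.add hb.lowerSemicontinuous)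
      (fun x => neg_le_iff_add_nonneg.1 (hbg x)) fun p hp => (hgint p hp).add (hbint p hp)
  have shift_eq : ∀ p ∈ K, (∫ x, g x + b x ∂(μ p)) + -∫ x, b x ∂(μ p) = ∫ x, g x ∂(μ p) :=
    fun p hp => by rw [integral_add (hgint p hp) (hbint p hp), add_neg_cancel_right]
  exact fun p hp => LowerSemicontinuousWithinAt.congr_of_eventuallyEq
    (lsc_shifted.add hbK.neg.lowerSemicontinuousOn p hp) hp
    (eventually_nhdsWithin_of_forall shift_eq)

end WeakConvergence

section Berge

variable {X A : Type*} [TopologicalSpace X] [TopologicalSpace A] {S : X → Set A}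

theorem eventually_forall_mem_of_upperHemicontinuousAt {x : X} (hS : UpperHemicontinuousAt S x)
    (hSx : IsCompact (S x)) {r : X × A → Prop}
    (hr : ∀ a ∈ S x, ∀ᶠ p in 𝓝[{p : X × A | p.2 ∈ S p.1}] (x, a), r p) :
    ∀ᶠ x' in 𝓝 x, ∀ a ∈ S x', r (x', a) := by
  have near_slice : ∀ᶠ q : A × X in 𝓝ˢ (S x) ×ˢ 𝓝 x, q.1 ∈ S q.2 → r (q.2, q.1) := by
    refine hSx.mem_nhdsSet_prod_of_forall fun a ha => ?_
    have near_point := eventually_nhdsWithin_iff.1 (hr a ha)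
    rw [nhds_prod_eq] at near_point
    exact tendsto_prod_swap.eventually near_point
  obtain ⟨inU, hU, nearX, hX, hUX⟩ := eventually_prod_iff.1 near_slice
  filter_upwards [hX, hS {a | inU a} hU] with x' hx' hSx' a ha
  exact hUX (subset_of_mem_nhdsSet hSx' ha) hx' ha

theorem lowerSemicontinuous_sInf_image_of_upperHemicontinuous
    {R : Type*} [ConditionallyCompleteLinearOrder R]
    (hS : UpperHemicontinuous S) (hScomp : ∀ x, IsCompact (S x)) (hSne : ∀ x, (S x).Nonempty)
    {h : X × A → R} (hh : LowerSemicontinuousOn h {p : X × A | p.2 ∈ S p.1}) :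
    LowerSemicontinuous fun x => sInf ((fun a => h (x, a)) '' S x) := by
  have lsc_slice (x : X) : LowerSemicontinuousOn (fun a => h (x, a)) (S x) :=
    hh.comp (by fun_prop) fun _ ha => ha
  intro x c hc
  have : Nonempty R := ⟨c⟩
  have lt_on_slice : ∀ a ∈ S x, c < h (x, a) := fun a ha =>
    lt_of_lt_of_le hc
      (csInf_le ((lsc_slice x).bddBelow_of_isCompact (hScomp x)) (Set.mem_image_of_mem _ ha))
  filter_upwards [eventually_forall_mem_of_upperHemicontinuousAt (hS x) (hScomp x)
    fun a ha => hh (x, a) ha c (lt_on_slice a ha)] with x' hx'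
  obtain ⟨a, ha, hmin⟩ := (lsc_slice x').exists_isMinOn (hSne x') (hScomp x')
  exact (hx' a ha).trans_le
    (le_csInf ((hSne x').image _) (Set.forall_mem_image.2 fun b hb => hmin hb))

end Berge

section Drift

variable {X : Type*} [MeasurableSpace X] {W w : X → ℝ} {α β L : ℝ}

theorem integrable_of_lintegral_ofReal_le {μ : Measure X} (hW : AEStronglyMeasurable W μ)
    (hW0 : 0 ≤ᵐ[μ] W) {c : ℝ}
    (h : ∫⁻ x, ENNReal.ofReal (W x) ∂μ ≤ ENNReal.ofReal c) : Integrable W μ :=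
  (lintegral_ofReal_ne_top_iff_integrable hW hW0).1
    (h.trans_lt ENNReal.ofReal_lt_top).ne

theorem integral_le_of_lintegral_ofReal_le {μ : Measure X} (hW : AEStronglyMeasurable W μ)
    (hW0 : 0 ≤ᵐ[μ] W) {c : ℝ} (hc : 0 ≤ c)
    (h : ∫⁻ x, ENNReal.ofReal (W x) ∂μ ≤ ENNReal.ofReal c) : ∫ x, W x ∂μ ≤ c := by
  rw [integral_eq_lintegral_of_nonneg_ae hW0 hW]
  exact ENNReal.toReal_le_of_le_ofReal hc h

variable {κ : X → Measure X}

theorem nonpos_of_le_discounted_integral (hα : 0 ≤ α) (hβ : 0 ≤ β) (hαβ : α * β < 1)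
    (hWint : ∀ x, Integrable W (κ x)) (hWβ : ∀ x, ∫ y, W y ∂(κ x) ≤ β * W x)
    (hwint : ∀ x, Integrable w (κ x)) (hL : 0 ≤ L) (hwL : ∀ x, w x ≤ L * W x)
    (hw : ∀ x, w x ≤ α * ∫ y, w y ∂(κ x)) (x : X) : w x ≤ 0 := by
  have geometric_bound (k : ℕ) : ∀ x, w x ≤ (α * β) ^ k * L * W x := by
    induction k with
    | zero => simpa only [pow_zero, one_mul] using hwL
    | succ k ih =>
      intro x
      calc w x ≤ α * ∫ y, w y ∂(κ x) := hw x
        _ ≤ α * ∫ y, (α * β) ^ k * L * W y ∂(κ x) := by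
          gcongr
          exacts [hwint x, (hWint x).const_mul _, ih]
        _ = α * ((α * β) ^ k * L * ∫ y, W y ∂(κ x)) := by rw [integral_const_mul]
        _ ≤ α * ((α * β) ^ k * L * (β * W x)) := by gcongr; exact hWβ x
        _ = (α * β) ^ (k + 1) * L * W x := by ring
  have tendsto_bound : Tendsto (fun k : ℕ => (α * β) ^ k * L * W x) atTop (𝓝 0) := by
    simpa only [zero_mul] using
      ((tendsto_pow_atTop_nhds_zero_of_lt_one (mul_nonneg hα hβ) hαβ).mul_const L).mul_const (W x)
  exact ge_of_tendsto' tendsto_bound fun k => geometric_bound k x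

end Drift

section Bellman

variable {X : Type*} [MeasurableSpace X]

/-- The expected discounted cost `C(p) + α ∫ u dQ(·|p)` of taking the state-action pair `p` when the
continuation is valued by `u`; thus `T_f u(x)` is its value at `p = (x, f(x))`. -/
noncomputable def actionValue {P : Type*} [MeasurableSpace P] (Q : Kernel P X) (C : P → ℝ) (α : ℝ)
    (u : X → ℝ) (p : P) : ℝ :=
  C p + α * ∫ y, u y ∂(Q p)

section ActionValue

variable {P : Type*} [MeasurableSpace P] {Q : Kernel P X} {C : P → ℝ} {α : ℝ} {u v : X → ℝ}

theorem actionValue_mono (hα : 0 ≤ α) {p : P} (hu : Integrable u (Q p)) (hv : Integrable v (Q p))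
    (huv : ∀ y, u y ≤ v y) : actionValue Q C α u p ≤ actionValue Q C α v p :=
  add_le_add_right (mul_le_mul_of_nonneg_left (integral_mono hu hv huv) hα) _

theorem lowerSemicontinuousOn_actionValue [TopologicalSpace P] {K : Set P} (hα : 0 ≤ α)
    (hC : LowerSemicontinuousOn C K)
    (hu : LowerSemicontinuousOn (fun p => ∫ y, u y ∂(Q p)) K) :
    LowerSemicontinuousOn (actionValue Q C α u) K :=
  hC.add ((continuous_const_mul α).comp_lowerSemicontinuousOn hu (monotone_mul_left_of_nonneg hα))

theorem le_actionValue_of_eq_actionValue_of_actionValue_le {f : X → P} {W : X → ℝ} {β L : ℝ}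
    (hα : 0 ≤ α) (hβ : 0 ≤ β) (hαβ : α * β < 1) (hWint : ∀ x, Integrable W (Q (f x)))
    (hWβ : ∀ x, ∫ y, W y ∂(Q (f x)) ≤ β * W x) (hv : ∀ x, Integrable v (Q (f x)))
    (hu : ∀ x, Integrable u (Q (f x))) (hL : 0 ≤ L) (hvuL : ∀ x, v x - u x ≤ L * W x)
    (hfix : ∀ x, v x = actionValue Q C α v (f x)) (hsup : ∀ x, actionValue Q C α u (f x) ≤ u x)
    (x : X) : v x ≤ actionValue Q C α u (f x) := by
  have difference_le (x : X) : v x - u x ≤ α * ∫ y, v y - u y ∂(Q (f x)) := by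
    have hvx := hfix x
    have hux := hsup x
    rw [actionValue] at hvx hux
    rw [integral_sub (hv x) (hu x)]
    linarith
  have v_le_u : ∀ y, v y ≤ u y := fun y => sub_nonpos.1 <|
    nonpos_of_le_discounted_integral hα hβ hαβ hWint hWβ (fun x => (hv x).sub (hu x)) hL hvuL
      difference_le y
  exact (hfix x).trans_le (actionValue_mono hα (hv x) (hu x) v_le_u)

end ActionValue

variable {A : Type*} [TopologicalSpace A] [MeasurableSpace A] {Adm : X → Set A}
  {Q : Kernel (X × A) X} {C : X × A → ℝ} {α : ℝ}

theorem tbell_le_actionValue [TopologicalSpace X] {u : X → ℝ} {x : X} (hAcomp : IsCompact (Adm x))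
    (hlsc : LowerSemicontinuousOn (actionValue Q C α u) {p : X × A | p.2 ∈ Adm p.1})
    {a : A} (ha : a ∈ Adm x) : Tbell Adm Q C α u x ≤ actionValue Q C α u (x, a) := by
  have lsc_slice : LowerSemicontinuousOn (fun a => actionValue Q C α u (x, a)) (Adm x) :=
    hlsc.comp (by fun_prop) fun _ hb => hb
  exact csInf_le (lsc_slice.bddBelow_of_isCompact hAcomp) (Set.mem_image_of_mem _ ha)

theorem tbell_le_lscEnvelope [MetricSpace X] {v e : X → ℝ} {f : X → A} (hα : 0 ≤ α)
    (hAcomp : ∀ x, IsCompact (Adm x)) (hAusc : UpperHemicontinuous Adm)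
    (hfsel : ∀ x, f x ∈ Adm x) (hfix : ∀ x, v x = actionValue Q C α v (x, f x))
    (he : IsLscEnvelope v e)
    (hlsc : LowerSemicontinuousOn (actionValue Q C α e) {p : X × A | p.2 ∈ Adm p.1})
    (hvint : ∀ x, Integrable v (Q (x, f x))) (heint : ∀ x, Integrable e (Q (x, f x))) (x : X) :
    Tbell Adm Q C α e x ≤ e x := by
  have tbell_lsc : LowerSemicontinuous (Tbell Adm Q C α e) :=
    lowerSemicontinuous_sInf_image_of_upperHemicontinuous hAusc hAcomp
      (fun y => ⟨f y, hfsel y⟩) hlsc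
  refine he.ge_of_lowerSemicontinuous_of_le tbell_lsc (fun y => ?_) x
  calc Tbell Adm Q C α e y
      ≤ actionValue Q C α e (y, f y) := tbell_le_actionValue (hAcomp y) hlsc (hfsel y)
    _ ≤ actionValue Q C α v (y, f y) := actionValue_mono hα (heint y) (hvint y) he.le
    _ = v y := (hfix y).symm

end Bellman

theorem policy_iteration_monotone_general {X A : Type*}
    [MetricSpace X] [MeasurableSpace X] [OpensMeasurableSpace X]
    [TopologicalSpace A] [FirstCountableTopology A] [MeasurableSpace A]
    {Adm : X → Set A} {Q : Kernel (X × A) X} [IsMarkovKernel Q] {C : X × A → ℝ}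
    {α β : ℝ} (hα : 0 ≤ α) (hβ : 0 ≤ β) (hαβ : α * β < 1)
    {W : X → ℝ} (hWpos : ∀ x, 0 < W x) (hWcont : Continuous W)
    (hQW : ∀ x, ∀ a ∈ Adm x,
      ∫⁻ y, ENNReal.ofReal (W y) ∂(Q (x, a)) ≤ ENNReal.ofReal (β * W x))
    (hQWcont : ContinuousOn (fun p => ∫ y, W y ∂(Q p)) {p : X × A | p.2 ∈ Adm p.1})
    (hAcomp : ∀ x, IsCompact (Adm x)) (hAusc : UpperHemicontinuous Adm)
    (hClsc : LowerSemicontinuousOn C {p : X × A | p.2 ∈ Adm p.1})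
    (hQweak : ∀ g : X → ℝ, Continuous g → (∃ b, ∀ y, |g y| ≤ b) →
      ContinuousOn (fun p => ∫ y, g y ∂(Q p)) {p : X × A | p.2 ∈ Adm p.1})
    {f : ℕ → X → A} (hfsel : ∀ n x, f n x ∈ Adm x)
    {v : ℕ → X → ℝ} (hvmeas : ∀ n, Measurable (v n)) (hvW : ∀ n, WNorm W (v n) < ⊤)
    (hvfix : ∀ n x, v n x = actionValue Q C α (v n) (x, f n x))
    {e : ℕ → X → ℝ} (hE : ∀ n, IsLscEnvelope (v n) (e n))
    (himp : ∀ n x, Tbell Adm Q C α (e n) x = actionValue Q C α (e n) (x, f (n + 1) x))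
    (n : ℕ) (x : X) :
    e n x ≤ v n x ∧ Tbell Adm Q C α (e n) x ≤ e n x ∧
      v (n + 1) x ≤ Tbell Adm Q C α (e n) x ∧ e (n + 1) x ≤ v (n + 1) x := by
  let N (k : ℕ) : ℝ := (WNorm W (v k)).toReal
  have hN (k : ℕ) : 0 ≤ N k := ENNReal.toReal_nonneg
  have hv (k : ℕ) (y : X) : |v k y| ≤ N k * W y := abs_le_toReal_wNorm_mul (hvW k) (hWpos y)
  have he (k : ℕ) (y : X) : |e k y| ≤ N k * W y :=
    (hE k).abs_le_of_forall_abs_le (hWcont.const_mul (N k)) (hv k) y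
  have hWint (y : X) (a : A) (ha : a ∈ Adm y) : Integrable W (Q (y, a)) :=
    integrable_of_lintegral_ofReal_le hWcont.measurable.aestronglyMeasurable
      (.of_forall fun z => (hWpos z).le) (hQW y a ha)
  have hWβ (y : X) : ∫ z, W z ∂(Q (y, f (n + 1) y)) ≤ β * W y :=
    integral_le_of_lintegral_ofReal_le hWcont.measurable.aestronglyMeasurable
      (.of_forall fun z => (hWpos z).le) (mul_nonneg hβ (hWpos y).le) (hQW y _ (hfsel _ y))
  have hvint (k : ℕ) (y : X) (a : A) (ha : a ∈ Adm y) : Integrable (v k) (Q (y, a)) :=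
    ((hWint y a ha).const_mul (N k)).mono' (hvmeas k).aestronglyMeasurable (.of_forall (hv k))
  have heint (y : X) (a : A) (ha : a ∈ Adm y) : Integrable (e n) (Q (y, a)) :=
    ((hWint y a ha).const_mul (N n)).mono'
      (hE n).lowerSemicontinuous.measurable.aestronglyMeasurable (.of_forall (he n))
  have hlsc : LowerSemicontinuousOn (actionValue Q C α (e n)) {p : X × A | p.2 ∈ Adm p.1} :=
    lowerSemicontinuousOn_actionValue hα hClsc
      (lowerSemicontinuousOn_integral_of_neg_le hQweak (hWcont.const_mul (N n))
        (fun p hp => (hWint p.1 p.2 hp).const_mul (N n))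
        (by simpa only [integral_const_mul] using hQWcont.const_mul (N n))
        (hE n).lowerSemicontinuous (fun y => neg_le_of_abs_le (he n y))
        fun p hp => heint p.1 p.2 hp)
  have Te_le_e : ∀ y, Tbell Adm Q C α (e n) y ≤ e n y :=
    tbell_le_lscEnvelope hα hAcomp hAusc (hfsel n) (hvfix n) (hE n) hlsc
      (fun y => hvint n y _ (hfsel n y)) fun y => heint y _ (hfsel n y)
  have v_succ_le_Te : v (n + 1) x ≤ Tbell Adm Q C α (e n) x := by
    rw [himp n x]
    refine le_actionValue_of_eq_actionValue_of_actionValue_le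
      (f := fun y => (y, f (n + 1) y)) hα hβ hαβ
      (fun y => hWint y _ (hfsel _ y)) hWβ (fun y => hvint _ y _ (hfsel _ y))
      (fun y => heint y _ (hfsel _ y)) (add_nonneg (hN (n + 1)) (hN n)) (fun y => ?_)
      (hvfix (n + 1)) (fun y => (himp n y).symm.trans_le (Te_le_e y)) x
    linarith [le_of_abs_le (hv (n + 1) y), neg_le_of_abs_le (he n y)]
  exact ⟨(hE n).le x, Te_le_e x, v_succ_le_Te, (hE (n + 1)).le x⟩

/-- Monotonicity of the policy iteration algorithm with smoothing: under (GC)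
and (CC), for the policy iteration sequences `v_n = V_{f_n}`, with `f_{n+1}` an
improvement selector for the envelope `v_nᵉ`, the chain
`v_n ≥ v_nᵉ ≥ T(v_nᵉ) ≥ v_{n+1} ≥ v_{n+1}ᵉ` holds pointwise
(Theorem 2(a) of the paper). -/
theorem policy_iteration_monotone {X A : Type*}
    [MetricSpace X] [PolishSpace X] [MeasurableSpace X] [BorelSpace X]
    [MetricSpace A] [PolishSpace A] [MeasurableSpace A] [BorelSpace A]
    (Adm : X → Set A) (hAne : ∀ x, (Adm x).Nonempty)
    (hKmeas : MeasurableSet {p : X × A | p.2 ∈ Adm p.1})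
    (Q : Kernel (X × A) X) [IsMarkovKernel Q]
    (C : X × A → ℝ) (hCmeas : Measurable C)
    (α : ℝ) (hα0 : 0 < α) (hα1 : α < 1)
    (M β : ℝ) (hM : 0 < M) (hβ : 1 < β)
    (W : X → ℝ) (hWmeas : Measurable W) (hW1 : ∀ x, 1 ≤ W x)
    (hCW : ∀ x, ∀ a ∈ Adm x, |C (x, a)| ≤ M * W x)
    (hQW : ∀ x, ∀ a ∈ Adm x,
      ∫⁻ y, ENNReal.ofReal (W y) ∂(Q (x, a)) ≤ ENNReal.ofReal (β * W x))
    (hγ : α * β < 1)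
    (hAcomp : ∀ x, IsCompact (Adm x))
    (hAusc : ∀ x, ∀ U : Set A, IsOpen U → Adm x ⊆ U → ∀ᶠ x' in 𝓝 x, Adm x' ⊆ U)
    (hClsc : LowerSemicontinuousOn C {p : X × A | p.2 ∈ Adm p.1})
    (hQweak : ∀ g : X → ℝ, Continuous g → (∃ b, ∀ y, |g y| ≤ b) →
      ContinuousOn (fun p : X × A => ∫ y, g y ∂(Q p)) {p : X × A | p.2 ∈ Adm p.1})
    (hWcont : Continuous W)
    (hQWcont : ContinuousOn (fun p : X × A => ∫ y, W y ∂(Q p))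
      {p : X × A | p.2 ∈ Adm p.1})
    (f : ℕ → X → A) (hfmeas : ∀ n, Measurable (f n))
    (hfsel : ∀ n x, f n x ∈ Adm x)
    (v : ℕ → X → ℝ) (hvmeas : ∀ n, Measurable (v n))
    (hvW : ∀ n, WNorm W (v n) < ⊤)
    (hvfix : ∀ n x, v n x = C (x, f n x) + α * ∫ y, v n y ∂(Q (x, f n x)))
    (e : ℕ → X → ℝ) (hE : ∀ n x, (e n x : EReal) = lscEnvE (v n) x)
    (himp : ∀ n x, Tbell Adm Q C α (e n) x =
      C (x, f (n + 1) x) + α * ∫ y, e n y ∂(Q (x, f (n + 1) x)))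
    : ∀ n x, e n x ≤ v n x ∧ Tbell Adm Q C α (e n) x ≤ e n x ∧
        v (n + 1) x ≤ Tbell Adm Q C α (e n) x ∧ e (n + 1) x ≤ v (n + 1) x :=
  policy_iteration_monotone_general hα0.le (zero_le_one.trans hβ.le) hγ
    (fun x => one_pos.trans_le (hW1 x)) hWcont hQW hQWcont hAcomp (.of_forall_isOpen hAusc)
    hClsc hQweak hfsel hvmeas hvW hvfix hE himp
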